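/- Let G be a finite group acting faithfully and transitively on a finite set Z, and let α ∈ Z. Then the set B_α = {β ∈ Z : σ(β) = β for all σ ∈ G_α} is a block of G. -/

import Mathlib

/-! By transitivity all point stabilizers are conjugate, so they have the same order; hence
`G_α ≤ G_β` already forces `G_α = G_β`, and `B_α` is the set of `β` with `G_β = G_α`. If `σ(B_α)`
meets `B_α`, then `σ` normalizes `G_α`, because `G_{σβ} = σ G_β σ⁻¹`. Then `σ⁻¹` maps `B_α` into
itself, that is, `B_α ⊆ σ(B_α)`. -/

open Pointwise

/-- `B` is a block of the action of `G` on `Z`: for every `σ ∈ G`, the set `σ(B) ∩ B`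
is empty or equals `B`. -/
def IsBlockOfAction (G : Type*) [Group G] {Z : Type*} [MulAction G Z] (B : Set Z) : Prop :=
  ∀ σ : G, σ • B ∩ B = ∅ ∨ σ • B ∩ B = B

/-- The points fixed by `G_α` are those with the same stabilizer as `α`: an inclusion of two
conjugate finite subgroups is an equality. -/
theorem fixed_by_stabilizer_iff {G Z : Type*} [Group G] [Finite G] [MulAction G Z]
    [MulAction.IsPretransitive G Z] (α β : Z) :
    (∀ σ ∈ MulAction.stabilizer G α, σ • β = β) ↔
      MulAction.stabilizer G β = MulAction.stabilizer G α := by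
  constructor
  · intro h
    obtain ⟨g, hg⟩ := MulAction.exists_smul_eq G α β
    refine (Subgroup.eq_of_le_of_card_ge (fun σ hσ => h σ hσ) (le_of_eq ?_)).symm
    rw [← hg, MulAction.stabilizer_smul_eq_stabilizer_map_conj]
    exact Subgroup.card_map_of_injective (MulAut.conj g).injective
  · intro h σ hσ
    rwa [← h] at hσ

/-- **Lemma.** Let `G` be a finite group acting faithfully and transitively on a finite
set `Z` and let `α ∈ Z`.  Then `B_α = {β ∈ Z : σ(β) = β for all σ ∈ G_α}` is a block
of `G`. -/
theorem fixedPoints_of_stabilizer_isBlock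
    {G Z : Type*} [Group G] [Finite G] [MulAction G Z] [Finite Z]
    [FaithfulSMul G Z] [MulAction.IsPretransitive G Z] (α : Z) :
    IsBlockOfAction G {β : Z | ∀ σ ∈ MulAction.stabilizer G α, σ • β = β} := by
  intro σ
  simp only [fixed_by_stabilizer_iff]
  rw [or_iff_not_imp_left, ← ne_eq, ← Set.nonempty_iff_ne_empty]
  rintro ⟨_, ⟨β, hβ, rfl⟩, hσβ⟩
  simp only [Set.mem_ofPred_eq] at hβ hσβ
  refine Set.inter_eq_right.mpr fun δ hδ => ?_
  rw [Set.mem_smul_set_iff_inv_smul_mem, Set.mem_ofPred_eq]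
  rw [Set.mem_ofPred_eq] at hδ
  -- Conjugation by `σ` is injective on subgroups, so it suffices to compare the conjugates
  -- `G_{σ(σ⁻¹δ)} = G_δ` and `G_{σβ}`, both equal to `G_α`.
  rw [← hβ]
  apply Subgroup.map_injective (f := (MulAut.conj σ).toMonoidHom) (MulAut.conj σ).injective
  have h₁ := MulAction.stabilizer_smul_eq_stabilizer_map_conj σ (σ⁻¹ • δ)
  have h₂ := MulAction.stabilizer_smul_eq_stabilizer_map_conj σ β
  rw [smul_inv_smul] at h₁
  exact h₁.symm.trans ((hδ.trans hσβ.symm).trans h₂)
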